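/- arXiv:math/0404371 — 4 statements merged into one kernel-verified Lean document; each statement's English description precedes it below -/
import Mathlib

section
/- Let Θ be a nonempty finite type and let m₁, …, m_k (k ≥ 2) be Bayesian basic belief assignments on Θ such that for every θ ∈ Θ there exists some index i with mᵢ({θ}) = 0 (i.e., each 'column' of the mass matrix contains at least one zero). Then the degree of conflict of m₁, …, m_k equals 1; consequently the Dempster combination m₁ ⊕ ⋯ ⊕ m_k is undefined (its normalizing denominator 1 − K equals 0). -/
/-!
By distributivity, the products `∏ i, m i (X i)` summed over all tuples `X` give
`∏ i, ∑ A, m i A = 1`, so it suffices that every tuple with nonempty intersection has product zero.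
If `θ` lies in all the `X i`, pick `i` with `m i {θ} = 0`: either `X i = {θ}`, or `X i` is not a
singleton and the Bayesian hypothesis applies; in both cases the factor `m i (X i)` vanishes.
-/

open Finset

/-- A basic belief assignment on a finite frame `Θ`. -/
def IsBBA {Θ : Type*} [Fintype Θ] [DecidableEq Θ] (m : Finset Θ → ℝ) : Prop :=
  m ∅ = 0 ∧ (∀ A : Finset Θ, 0 ≤ m A) ∧ (∑ A : Finset Θ, m A) = 1

/-- Degree of conflict of `k` sources. -/
noncomputable def conflict {Θ : Type*} [Fintype Θ] [DecidableEq Θ] (k : ℕ)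
    (m : Fin k → Finset Θ → ℝ) : ℝ :=
  ∑ X ∈ Finset.univ.filter (fun X : Fin k → Finset Θ => Finset.univ.inf X = ∅),
    ∏ i, m i (X i)

/-- Dempster's rule of combination of `k` sources. -/
noncomputable def dempster {Θ : Type*} [Fintype Θ] [DecidableEq Θ] (k : ℕ)
    (m : Fin k → Finset Θ → ℝ) (B : Finset Θ) : ℝ :=
  if B = ∅ then 0 else
    (∑ X ∈ Finset.univ.filter (fun X : Fin k → Finset Θ => Finset.univ.inf X = B),
      ∏ i, m i (X i)) / (1 - conflict k m)

/-- A bba is Bayesian if its mass vanishes on every non-singleton. -/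
def IsBayesian {Θ : Type*} [Fintype Θ] [DecidableEq Θ] (m : Finset Θ → ℝ) : Prop :=
  ∀ A : Finset Θ, (¬ ∃ θ : Θ, A = {θ}) → m A = 0

theorem bayesian_column_zero_conflict_one
    {Θ : Type*} [Fintype Θ] [DecidableEq Θ] [Nonempty Θ]
    (k : ℕ) (hk : 2 ≤ k) (m : Fin k → Finset Θ → ℝ)
    (hbba : ∀ i, IsBBA (m i)) (hbayes : ∀ i, IsBayesian (m i))
    (hcol : ∀ θ : Θ, ∃ i, m i {θ} = 0) :
    conflict k m = 1 ∧ 1 - conflict k m = 0 := by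
  have h : conflict k m = 1 := by
    have hall : ∑ X : Fin k → Finset Θ, ∏ i, m i (X i) = 1 := by
      rw [← Fintype.prod_sum]
      exact Finset.prod_eq_one fun i _ => (hbba i).2.2
    rw [conflict, ← hall]
    refine Finset.sum_subset (Finset.filter_subset _ _) fun X _ hX => ?_
    have hne : Finset.univ.inf X ≠ ∅ := by simpa using hX
    obtain ⟨θ, hθ⟩ := Finset.nonempty_iff_ne_empty.mpr hne
    obtain ⟨i, hi⟩ := hcol θ
    have hmem : θ ∈ X i := (Finset.inf_le (f := X) (Finset.mem_univ i)) hθ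
    refine Finset.prod_eq_zero (Finset.mem_univ i) ?_
    by_cases hs : ∃ t : Θ, X i = {t}
    · obtain ⟨t, ht⟩ := hs
      rw [ht, Finset.mem_singleton] at hmem
      rw [ht, ← hmem, hi]
    · exact hbayes i _ hs
  exact ⟨h, by rw [h, sub_self]⟩
end

section
/- Let Θ be a nonempty finite type and let m₁, …, m_k (k ≥ 2) be basic belief assignments on Θ. Suppose there are subsets U₁, …, U_u ⊆ Θ (u ≥ 1) such that: (i) each U_j is nonempty and a proper subset of Θ (a partial ignorance), and the U_j are pairwise disjoint; (ii) every focal element of every mᵢ is either a singleton or one of the U_j; (iii) for every θ ∈ Θ there exists an index i with mᵢ({θ}) = 0; (iv) for every j such that mᵢ(U_j) > 0 for some i, there exists an index i₀ with m_{i₀}(U_j) = 0 and m_{i₀}({θ}) = 0 for every θ ∈ U_j. Then the degree of conflict of m₁, …, m_k equals 1, so the Dempster combination m₁ ⊕ ⋯ ⊕ m_k is undefined. -/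
/-!
The products `∏ i, m i (X i)` over all tuples `X` sum to `∏ i, ∑ A, m i A = 1`, so it suffices that
every tuple with nonempty intersection contributes zero. Suppose such a tuple consists of focal
elements and `θ` is a common point. By disjointness at most one `U j` contains `θ`, so every `X i`
is `{θ}` or that `U j`. If some `X i` is `U j`, the source `i₀` that gives no mass to `U j` or to
singletons inside it has no admissible `X i₀`; otherwise every `X i` is `{θ}`, against the
existence of a source giving `{θ}` no mass.
-/

open Finset

theorem general_sources_conflict_one
    {Θ : Type*} [Fintype Θ] [DecidableEq Θ] [Nonempty Θ]
    (k : ℕ) (hk : 2 ≤ k) (m : Fin k → Finset Θ → ℝ)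
    (hbba : ∀ i, IsBBA (m i))
    (u : ℕ) (hu : 1 ≤ u) (U : Fin u → Finset Θ)
    (hUne : ∀ j, (U j).Nonempty) (hUproper : ∀ j, U j ≠ Finset.univ)
    (hUdisj : ∀ j j', j ≠ j' → U j ∩ U j' = ∅)
    (hfocal : ∀ i (A : Finset Θ), 0 < m i A → (∃ θ : Θ, A = {θ}) ∨ ∃ j, A = U j)
    (hcol : ∀ θ : Θ, ∃ i, m i {θ} = 0)
    (hucol : ∀ j, (∃ i, 0 < m i (U j)) →
      ∃ i₀, m i₀ (U j) = 0 ∧ ∀ θ ∈ U j, m i₀ {θ} = 0) :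
    conflict k m = 1 := by
  have htot : ∑ X : Fin k → Finset Θ, ∏ i, m i (X i) = 1 := by
    rw [← Fintype.prod_sum (fun i A => m i A)]
    exact Finset.prod_eq_one fun i _ => (hbba i).2.2
  rw [conflict, ← htot]
  refine Finset.sum_subset (Finset.filter_subset _ _) fun X _ hX => ?_
  by_contra hprod
  have hpos : ∀ i, 0 < m i (X i) := fun i =>
    lt_of_le_of_ne ((hbba i).2.1 _) fun h =>
      hprod (Finset.prod_eq_zero (Finset.mem_univ i) h.symm)
  obtain ⟨θ, hθ⟩ : (Finset.univ.inf X).Nonempty := by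
    rw [Finset.nonempty_iff_ne_empty]
    simpa using hX
  have hmem : ∀ i, θ ∈ X i := fun i =>
    (Finset.inf_le (Finset.mem_univ i) : Finset.univ.inf X ≤ X i) hθ
  -- Two of the sets `U j` that share `θ` coincide, so each `X i` is `{θ}` or a fixed `U j`.
  by_cases hex : ∃ i j, X i = U j
  · obtain ⟨i, j, hij⟩ := hex
    have hθj : θ ∈ U j := hij ▸ hmem i
    obtain ⟨i₀, hU0, hs0⟩ := hucol j ⟨i, hij ▸ hpos i⟩
    have hp := hpos i₀
    have hm := hmem i₀
    rcases hfocal i₀ _ hp with ⟨θ', h⟩ | ⟨j', h⟩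
    · rw [h] at hp hm
      rw [← Finset.mem_singleton.mp hm, hs0 θ hθj] at hp
      exact lt_irrefl _ hp
    · rw [h] at hp hm
      have hjj : j = j' := by
        by_contra hne
        have := Finset.mem_inter.mpr ⟨hθj, hm⟩
        rw [hUdisj j j' hne] at this
        exact Finset.notMem_empty _ this
      rw [← hjj, hU0] at hp
      exact lt_irrefl _ hp
  · obtain ⟨i, hi⟩ := hcol θ
    have hp := hpos i
    have hm := hmem i
    rcases hfocal i _ hp with ⟨θ', h⟩ | ⟨j, h⟩
    · rw [h] at hp hm
      rw [← Finset.mem_singleton.mp hm, hi] at hp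
      exact lt_irrefl _ hp
    · exact hex ⟨i, j, h⟩
end

section
/- Let Θ be a nonempty finite type and let m₁, …, m_k (k ≥ 2) be Bayesian basic belief assignments on Θ. Suppose there is an element θ* ∈ Θ such that mᵢ({θ*}) > 0 for every index i, while for every θ ≠ θ* there exists some index i with mᵢ({θ}) = 0. Then the degree of conflict is K = 1 − ∏ᵢ mᵢ({θ*}) < 1, and the Dempster combination satisfies (m₁ ⊕ ⋯ ⊕ m_k)({θ*}) = 1 and (m₁ ⊕ ⋯ ⊕ m_k)(B) = 0 for every other subset B; in particular this holds no matter how small the positive masses mᵢ({θ*}) are. -/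
/-!
A tuple `X` of focal sets with nonzero mass product consists of singletons. If these singletons
share a point `θ`, then all of them equal `{θ}`, and the hypothesis on the columns `θ ≠ θs` forces
`θ = θs`. So the constant tuple `{θs}` is the only non-conflicting tuple that carries mass
(`eq_const_of_prod_ne_zero`). As the mass products of all tuples sum to `1` (`sum_prod_eq_one`),
the conflict is `1 - ∏ i, m i {θs}`, and normalization sends all the remaining mass to `{θs}`.
-/

open Finset

lemma sum_prod_eq_one {Θ : Type*} [Fintype Θ] [DecidableEq Θ] (k : ℕ)
    (m : Fin k → Finset Θ → ℝ) (hbba : ∀ i, IsBBA (m i)) :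
    ∑ X : Fin k → Finset Θ, ∏ i, m i (X i) = 1 := by
  rw [← Fintype.prod_sum]
  exact Finset.prod_eq_one fun i _ => (hbba i).2.2

lemma eq_const_of_prod_ne_zero {Θ : Type*} [Fintype Θ] [DecidableEq Θ] {k : ℕ}
    {m : Fin k → Finset Θ → ℝ} (hbayes : ∀ i, IsBayesian (m i)) {θs : Θ}
    (hcol : ∀ θ : Θ, θ ≠ θs → ∃ i, m i {θ} = 0) {X : Fin k → Finset Θ}
    (hX : Finset.univ.inf X ≠ ∅) (hprod : ∏ i, m i (X i) ≠ 0) :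
    X = fun _ => {θs} := by
  obtain ⟨θ, hθ⟩ := Finset.nonempty_iff_ne_empty.mpr hX
  have hne : ∀ i, m i (X i) ≠ 0 := fun i => Finset.prod_ne_zero_iff.mp hprod i (Finset.mem_univ i)
  have hsing : ∀ i, X i = {θ} := by
    intro i
    have hmem : θ ∈ X i := (Finset.inf_le (f := X) (Finset.mem_univ i)) hθ
    obtain ⟨η, hη⟩ : ∃ η, X i = {η} := by
      by_contra h
      exact hne i (hbayes i _ h)
    rw [hη, Finset.mem_singleton] at hmem
    rw [hη, hmem]
  have hθs : θ = θs := by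
    by_contra h
    obtain ⟨i, hi⟩ := hcol θ h
    exact hne i (by rw [hsing i, hi])
  funext i
  rw [hsing i, hθs]

theorem bayesian_common_singleton_dempster_one
    {Θ : Type*} [Fintype Θ] [DecidableEq Θ] [Nonempty Θ]
    (k : ℕ) (hk : 2 ≤ k) (m : Fin k → Finset Θ → ℝ)
    (hbba : ∀ i, IsBBA (m i)) (hbayes : ∀ i, IsBayesian (m i))
    (θs : Θ) (hpos : ∀ i, 0 < m i {θs})
    (hcol : ∀ θ : Θ, θ ≠ θs → ∃ i, m i {θ} = 0) :
    conflict k m = 1 - ∏ i, m i {θs} ∧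
    conflict k m < 1 ∧
    dempster k m {θs} = 1 ∧
    ∀ B : Finset Θ, B ≠ {θs} → dempster k m B = 0 := by
  -- With no sources the empty intersection would be the whole frame, hence `k ≠ 0` is needed.
  have hinf : (Finset.univ : Finset (Fin k)).inf (fun _ => ({θs} : Finset Θ)) = {θs} :=
    Finset.inf_const ⟨⟨0, by omega⟩, Finset.mem_univ _⟩ _
  have hP : 0 < ∏ i, m i {θs} := Finset.prod_pos fun i _ => hpos i
  have hsum : ∑ X ∈ Finset.univ.filter (fun X : Fin k → Finset Θ => ¬ Finset.univ.inf X = ∅),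
      ∏ i, m i (X i) = ∏ i, m i {θs} := by
    refine Finset.sum_eq_single_of_mem (fun _ : Fin k => ({θs} : Finset Θ))
      (Finset.mem_filter.mpr ⟨Finset.mem_univ _, by simp [hinf]⟩) fun X hX hne => ?_
    by_contra h
    exact hne (eq_const_of_prod_ne_zero hbayes hcol (Finset.mem_filter.mp hX).2 h)
  have hconf : conflict k m = 1 - ∏ i, m i {θs} := by
    have h := Finset.sum_filter_add_sum_filter_not Finset.univ
      (fun X : Fin k → Finset Θ => Finset.univ.inf X = ∅) (fun X => ∏ i, m i (X i))
    rw [hsum, sum_prod_eq_one k m hbba] at h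
    unfold conflict
    linarith
  refine ⟨hconf, by linarith, ?_, fun B hB => ?_⟩
  · have hnum : ∑ X ∈ Finset.univ.filter (fun X : Fin k → Finset Θ => Finset.univ.inf X = {θs}),
        ∏ i, m i (X i) = ∏ i, m i {θs} := by
      refine Finset.sum_eq_single_of_mem (fun _ : Fin k => ({θs} : Finset Θ))
        (Finset.mem_filter.mpr ⟨Finset.mem_univ _, by simp [hinf]⟩) fun X hX hne => ?_
      by_contra h
      refine hne (eq_const_of_prod_ne_zero hbayes hcol ?_ h)
      rw [(Finset.mem_filter.mp hX).2]
      exact Finset.singleton_ne_empty θs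
    rw [dempster, if_neg (Finset.singleton_ne_empty θs), hnum, hconf, sub_sub_cancel,
      div_self hP.ne']
  · unfold dempster
    split_ifs with hB0
    · rfl
    · rw [Finset.sum_eq_zero, zero_div]
      intro X hX
      have hXB := (Finset.mem_filter.mp hX).2
      by_contra h
      have hc := eq_const_of_prod_ne_zero hbayes hcol (hXB ▸ hB0) h
      rw [hc, hinf] at hXB
      exact hB hXB.symm
end

section
/- Let Θ be a nonempty finite type and let m₁, …, m_k (k ≥ 2) be basic belief assignments on Θ. Suppose U ⊆ Θ is a nonempty proper subset (a partial ignorance) such that: (i) every focal element of every mᵢ is either a singleton or equal to U; (ii) mᵢ(U) > 0 for every index i; (iii) for every θ ∈ Θ there exists an index i with mᵢ({θ}) = 0; (iv) mᵢ({θ}) = 0 for every index i and every θ ∈ U. Then the degree of conflict is K = 1 − ∏ᵢ mᵢ(U) < 1, and the Dempster combination satisfies (m₁ ⊕ ⋯ ⊕ m_k)(U) = 1 and (m₁ ⊕ ⋯ ⊕ m_k)(B) = 0 for every other subset B. -/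
/-!
A tuple `X` of focal elements whose intersection contains some `θ` must be constantly `U`: if
`θ ∈ U`, no `X i` can be the massless singleton `{θ}`; if `θ ∉ U`, every `X i` would be `{θ}`,
which some source gives mass zero. So all the mass of the conjunctive combination lies on the
tuple `(U, …, U)`, with intersection `U` and weight `∏ i, m i U`, and on tuples with empty
intersection. Since all the weights sum to `∏ i, ∑ A, m i A = 1`, the conflict is
`1 - ∏ i, m i U`, and normalization gives `U` mass one.
-/

open Finset

theorem uncertainty_dempster_total_ignorance
    {Θ : Type*} [Fintype Θ] [DecidableEq Θ] [Nonempty Θ]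
    (k : ℕ) (hk : 2 ≤ k) (m : Fin k → Finset Θ → ℝ)
    (hbba : ∀ i, IsBBA (m i))
    (U : Finset Θ) (hUne : U.Nonempty) (hUproper : U ≠ Finset.univ)
    (hfocal : ∀ i (A : Finset Θ), 0 < m i A → (∃ θ : Θ, A = {θ}) ∨ A = U)
    (hUpos : ∀ i, 0 < m i U)
    (hcol : ∀ θ : Θ, ∃ i, m i {θ} = 0)
    (hUzero : ∀ i, ∀ θ ∈ U, m i {θ} = 0) :
    conflict k m = 1 - ∏ i, m i U ∧
    conflict k m < 1 ∧
    dempster k m U = 1 ∧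
    ∀ B : Finset Θ, B ≠ U → dempster k m B = 0 := by
  have key : ∀ X : Fin k → Finset Θ, Finset.univ.inf X ≠ ∅ → X ≠ (fun _ => U) →
      ∏ i, m i (X i) = 0 := by
    intro X hX hXU
    by_contra hne
    have hpos : ∀ i, 0 < m i (X i) := fun i =>
      lt_of_le_of_ne ((hbba i).2.1 _) (Ne.symm (Finset.prod_ne_zero_iff.1 hne i (Finset.mem_univ i)))
    obtain ⟨θ, hθ⟩ := Finset.nonempty_iff_ne_empty.2 hX
    have hmem : ∀ i, θ ∈ X i := fun i =>
      (Finset.inf_le (f := X) (Finset.mem_univ i)) hθ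
    have hcase : ∀ i, X i = {θ} ∨ X i = U := by
      intro i
      rcases hfocal i _ (hpos i) with ⟨t, ht⟩ | h
      · left
        have h := hmem i
        rw [ht, Finset.mem_singleton] at h
        rw [ht, h]
      · exact Or.inr h
    by_cases hU : θ ∈ U
    · apply hXU
      funext i
      rcases hcase i with h | h
      · have hp := hpos i
        rw [h, hUzero i θ hU] at hp
        exact absurd hp (lt_irrefl _)
      · exact h
    · obtain ⟨i, hi⟩ := hcol θ
      rcases hcase i with h | h
      · have hp := hpos i
        rw [h, hi] at hp
        exact lt_irrefl _ hp
      · exact hU (h ▸ hmem i)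
  have hinfU : Finset.univ.inf (fun _ : Fin k => U) = U :=
    Finset.inf_const ⟨⟨0, by omega⟩, Finset.mem_univ _⟩ U
  have hPpos : 0 < ∏ i, m i U := Finset.prod_pos fun i _ => hUpos i
  have htotal : ∑ X : Fin k → Finset Θ, ∏ i, m i (X i) = 1 := by
    rw [← Fintype.piFinset_univ, ← Finset.prod_univ_sum]
    exact Finset.prod_eq_one fun i _ => (hbba i).2.2
  have hrest : ∑ X ∈ Finset.univ.filter
      (fun X : Fin k → Finset Θ => ¬ Finset.univ.inf X = ∅), ∏ i, m i (X i) = ∏ i, m i U := by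
    refine Finset.sum_eq_single_of_mem (fun _ => U) ?_ fun X hX hXU =>
      key X (Finset.mem_filter.1 hX).2 hXU
    simpa [hinfU] using hUne.ne_empty
  have hK : conflict k m = 1 - ∏ i, m i U := by
    have h := Finset.sum_filter_add_sum_filter_not Finset.univ
      (fun X : Fin k → Finset Θ => Finset.univ.inf X = ∅) (fun X => ∏ i, m i (X i))
    rw [htotal, hrest] at h
    unfold conflict
    linarith
  refine ⟨hK, by linarith, ?_, fun B hB => ?_⟩
  · have hsum : ∑ X ∈ Finset.univ.filter
        (fun X : Fin k → Finset Θ => Finset.univ.inf X = U), ∏ i, m i (X i) = ∏ i, m i U := by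
      refine Finset.sum_eq_single_of_mem (fun _ => U) ?_ fun X hX hXU =>
        key X ((Finset.mem_filter.1 hX).2.trans_ne hUne.ne_empty) hXU
      simpa using hinfU
    rw [dempster, if_neg hUne.ne_empty, hsum, hK, sub_sub_cancel, div_self hPpos.ne']
  · unfold dempster
    split_ifs with hB0
    · rfl
    · rw [Finset.sum_eq_zero, zero_div]
      intro X hX
      have hXB := (Finset.mem_filter.1 hX).2
      refine key X (hXB.trans_ne hB0) ?_
      rintro rfl
      exact hB (hXB.symm.trans hinfU)
end
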